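/- For all W, V ∈ X the integral defining B(W,V) converges absolutely, and there exists a constant C > 0 such that |B(W,V)| ≤ C ‖W‖_X ‖V‖_X for all W, V ∈ X; that is, B is a bounded sesquilinear form on X × X. -/

import Mathlib

noncomputable section

open MeasureTheory Complex Filter Topology
open scoped Real NNReal ContDiff

/-- The plane `ℝ²`. -/
abbrev R2 : Type := EuclideanSpace ℝ (Fin 2)

/-- Euclidean dot product on `ℝ²`. -/
def rdot (x ξ : R2) : ℝ := x 0 * ξ 0 + x 1 * ξ 1

/-- `testFT φ ξ = ∫ e^{i x·ξ} φ(x) dx`, the (inverse-type) Fourier integral of a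
test function `φ`. -/
def testFT (φ : R2 → ℂ) (ξ : R2) : ℂ :=
  ∫ x : R2, Complex.exp (Complex.I * (rdot x ξ : ℂ)) * φ x

/-- The squared `H^s(ℝ²)` norm of the distribution whose Fourier transform is `F`:
`‖f‖² = (2π)⁻² ∫ (1+|ξ|²)^s |f̂(ξ)|² dξ`. -/
def wnormSq (s : ℝ) (F : R2 → ℂ) : ℝ :=
  ((2 * π) ^ 2)⁻¹ * ∫ ξ : R2, ((1 : ℝ) + ‖ξ‖ ^ 2) ^ s * ‖F ξ‖ ^ 2

/-- The `H^s(ℝ²)` norm (Fourier-side representation). -/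
def wnorm (s : ℝ) (F : R2 → ℂ) : ℝ := Real.sqrt (wnormSq s F)

/-- `F` is the Fourier transform of an element of `H^s(ℝ²)`. -/
def MemHs (s : ℝ) (F : R2 → ℂ) : Prop :=
  AEStronglyMeasurable F (volume : Measure R2) ∧
    Integrable (fun ξ : R2 => ((1 : ℝ) + ‖ξ‖ ^ 2) ^ s * ‖F ξ‖ ^ 2) volume

/-- An element `f` of `H̃^s(Γ)`: a distribution on `ℝ²` of Sobolev regularity `s`
supported in the closure of `Γ`, represented by its Fourier transform `ft`
(a continuous function, `f` being a compactly supported distribution).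
The support condition is expressed by testing against smooth compactly supported
functions `φ` whose support avoids `closure Γ`, via the Parseval pairing
`∫ f φ dx = (2π)⁻² ∫ f̂(ξ) φ̌(ξ) dξ` with `φ̌(ξ) = ∫ e^{ix·ξ} φ(x) dx`. -/
structure HTildeElt (s : ℝ) (Γ : Set R2) where
  ft : R2 → ℂ
  cont : Continuous ft
  mem : Integrable (fun ξ : R2 => ((1 : ℝ) + ‖ξ‖ ^ 2) ^ s * ‖ft ξ‖ ^ 2) volume
  supp : ∀ φ : R2 → ℂ, ContDiff ℝ ∞ φ → HasCompactSupport φ →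
    tsupport φ ∩ closure Γ = ∅ → (∫ ξ : R2, ft ξ * testFT φ ξ) = 0

/-- `Γ` is a bounded Lipschitz domain in `ℝ²`: a nonempty bounded open set whose
boundary is locally, after a rigid motion, the graph of a Lipschitz function with
the domain on one side. -/
def IsLipschitzDomain (Γ : Set R2) : Prop :=
  IsOpen Γ ∧ Bornology.IsBounded Γ ∧ Γ.Nonempty ∧
    ∀ x ∈ frontier Γ, ∃ (e : R2 ≃ₗᵢ[ℝ] R2) (L : ℝ≥0) (f : ℝ → ℝ) (U : Set R2),
      LipschitzWith L f ∧ IsOpen U ∧ x ∈ U ∧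
        ∀ y ∈ U, (y ∈ Γ ↔ f (e y 0) < e y 1)

/-- `ξ·V̂(ξ)`, i.e. `-i` times the Fourier transform of `div V`. -/
def dotFt (F1 F2 : R2 → ℂ) (ξ : R2) : ℂ := (ξ 0 : ℂ) * F1 ξ + (ξ 1 : ℂ) * F2 ξ

/-- `ξ⊥·V̂(ξ)`, i.e. `-i` times the Fourier transform of `curl V`. -/
def curlFt (F1 F2 : R2 → ℂ) (ξ : R2) : ℂ := (ξ 1 : ℂ) * F1 ξ - (ξ 0 : ℂ) * F2 ξ

/-- An element of `X = H̃^{-1/2}_div(Γ)`: a pair of elements of `H̃^{-1/2}(Γ)`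
whose distributional divergence also belongs to `H̃^{-1/2}(Γ)`. -/
structure Xelt (Γ : Set R2) where
  c1 : HTildeElt (-(1/2) : ℝ) Γ
  c2 : HTildeElt (-(1/2) : ℝ) Γ
  divMem : Integrable (fun ξ : R2 =>
    ((1 : ℝ) + ‖ξ‖ ^ 2) ^ (-(1/2) : ℝ) * ‖dotFt c1.ft c2.ft ξ‖ ^ 2) volume

/-- The Fourier transform of `div V`. -/
def divFt {Γ : Set R2} (V : Xelt Γ) (ξ : R2) : ℂ :=
  Complex.I * dotFt V.c1.ft V.c2.ft ξ

/-- The squared `H`-norm `‖V‖²_H` of a vector field. -/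
def HnormSq {Γ : Set R2} (V : Xelt Γ) : ℝ :=
  wnormSq (-(1/2)) V.c1.ft + wnormSq (-(1/2)) V.c2.ft

/-- The squared `X`-norm `‖V‖²_X = ‖V‖²_H + ‖div V‖²_{H̃^{-1/2}}`. -/
def XnormSq {Γ : Set R2} (V : Xelt Γ) : ℝ :=
  HnormSq V + wnormSq (-(1/2)) (divFt V)

/-- The `X`-norm. -/
def Xnorm {Γ : Set R2} (V : Xelt Γ) : ℝ := Real.sqrt (XnormSq V)

/-- `ĝ₀(ξ) = i/√(k²-|ξ|²)`, with the branch `√(k²-|ξ|²) = i√(|ξ|²-k²)` for `|ξ| > k`. -/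
def g0hat (k : ℝ) (ξ : R2) : ℂ :=
  if ‖ξ‖ < k then Complex.I / ((Real.sqrt (k ^ 2 - ‖ξ‖ ^ 2) : ℝ) : ℂ)
  else 1 / ((Real.sqrt (‖ξ‖ ^ 2 - k ^ 2) : ℝ) : ℂ)

/-- The integrand of the sesquilinear form `B`:
`ĝ₀(ξ) [ (|ξ|²-k²) a₁ b̄₁ - k² a₂ b̄₂ ]` with `a₁ = ξ·Ŵ/|ξ|`, `a₂ = ξ⊥·Ŵ/|ξ|`, etc. -/
def Bintegrand (k : ℝ) (F1 F2 G1 G2 : R2 → ℂ) (ξ : R2) : ℂ :=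
  g0hat k ξ *
    (((‖ξ‖ ^ 2 - k ^ 2 : ℝ) : ℂ) * (dotFt F1 F2 ξ * starRingEnd ℂ (dotFt G1 G2 ξ)) -
      ((k ^ 2 : ℝ) : ℂ) * (curlFt F1 F2 ξ * starRingEnd ℂ (curlFt G1 G2 ξ))) /
    ((‖ξ‖ ^ 2 : ℝ) : ℂ)

/-- The sesquilinear form `B(W,V)`. -/
def Bform (k : ℝ) {Γ : Set R2} (W V : Xelt Γ) : ℂ :=
  ∫ ξ : R2, Bintegrand k W.c1.ft W.c2.ft V.c1.ft V.c2.ft ξ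

/-- The sesquilinear form `E(q,V) = B(curl⃗ q, V)`, where
`curl⃗ q = (∂q/∂x₂, -∂q/∂x₁)` has Fourier transform `(iξ₂ q̂, -iξ₁ q̂)`. -/
def Eform (k : ℝ) {Γ : Set R2} (q : HTildeElt (1/2 : ℝ) Γ) (V : Xelt Γ) : ℂ :=
  ∫ ξ : R2, Bintegrand k (fun η => Complex.I * (η 1 : ℂ) * q.ft η)
      (fun η => -(Complex.I * (η 0 : ℂ) * q.ft η)) V.c1.ft V.c2.ft ξ

/-- The inner product of the Hilbert space `X`; by the Riesz representation
theorem, every bounded conjugate-linear functional on `X` is `V ↦ Xinner Y V`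
for a unique `Y ∈ X`, with functional norm `Xnorm Y`. -/
def Xinner {Γ : Set R2} (Y V : Xelt Γ) : ℂ :=
  ((((2 * π) ^ 2)⁻¹ : ℝ) : ℂ) * ∫ ξ : R2, ((((1 : ℝ) + ‖ξ‖ ^ 2) ^ (-(1/2) : ℝ) : ℝ) : ℂ) *
    (Y.c1.ft ξ * starRingEnd ℂ (V.c1.ft ξ) + Y.c2.ft ξ * starRingEnd ℂ (V.c2.ft ξ) +
      divFt Y ξ * starRingEnd ℂ (divFt V ξ))

/-- `√(k²-|ξ|²)`, with the branch `i√(|ξ|²-k²)` for `|ξ| > k`. -/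
def rootk (k : ℝ) (ξ : R2) : ℂ :=
  if ‖ξ‖ < k then ((Real.sqrt (k ^ 2 - ‖ξ‖ ^ 2) : ℝ) : ℂ)
  else Complex.I * ((Real.sqrt (‖ξ‖ ^ 2 - k ^ 2) : ℝ) : ℂ)

/-- The Fourier multiplier `i/(2√(k²-|ξ|²))` of the Helmholtz single-layer
operator `T` with kernel `e^{ik|x-y|}/(4π|x-y|)`. -/
def mT (k : ℝ) (ξ : R2) : ℂ := Complex.I / (2 * rootk k ξ)

/-- The Fourier multiplier `1/(2|ξ|)` of the Laplace single-layer operator `T₀`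
with kernel `1/(4π|x-y|)`. -/
def mT0 (ξ : R2) : ℂ := 1 / (2 * ((‖ξ‖ : ℝ) : ℂ))

/-- The Fourier multiplier of `R = T - T₀`. -/
def mR (k : ℝ) (ξ : R2) : ℂ := mT k ξ - mT0 ξ

/-- The distributions with Fourier data `G` and `E` have the same restriction to
the open set `Γ`: `⟨G - E, φ⟩ = 0` for all smooth `φ` compactly supported in `Γ`
(pairing written on the Fourier side). -/
def AgreeOn (Γ : Set R2) (G E : R2 → ℂ) : Prop :=
  ∀ φ : R2 → ℂ, ContDiff ℝ ∞ φ → HasCompactSupport φ → tsupport φ ⊆ Γ →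
    (∫ ξ : R2, (G ξ - E ξ) * testFT φ ξ) = 0

/-- The duality pairing `⟨f, ψ⟩` between `H^{1/2}(Γ)` and `H̃^{-1/2}(Γ)`, written
on the Fourier side (Plancherel): `(2π)⁻² ∫ f̂(ξ) conj(ψ̂(ξ)) dξ`, where `G = f̂`
is the Fourier data of (an extension of) `f`. -/
def dualPair (G ψ : R2 → ℂ) : ℂ :=
  ((((2 * π) ^ 2)⁻¹ : ℝ) : ℂ) * ∫ ξ : R2, G ξ * starRingEnd ℂ (ψ ξ)

open scoped SchwartzMap FourierTransform

/-!
The form has two dangerous regions: the circle `|ξ| = k`, where `ĝ₀` is singular, and infinity.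

Near the circle `ĝ₀` is integrable, being of size `| |ξ| - k |^{-1/2}`, so it suffices to bound the
Fourier transforms locally uniformly by the norm. If `u` is supported in `closure Γ` and the cutoff
`χ` equals `1` on a ball containing `closure Γ`, then `χ u = u`, so `û` is the convolution of `û`
with a Schwartz function `K`, and Cauchy–Schwarz with the weights `⟨ξ⟩^{2s}` and `⟨ξ⟩^{-2s}` gives
`|û(ξ)| ≤ C ⟨ξ⟩^{|s|} ‖u‖_{H^s}`. Since `u` is only given through the pairings
`∫ û(ξ) φ̌(ξ) dξ`, the convolution identity is recovered as follows: dilating `χ` does not change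
`∫ û(ξ) χ̌(ξ - ξ₀) dξ`, while the dilated `χ̌` concentrate at `ξ₀` with total mass `(2π)² χ(0)`.

For `|ξ| ≥ 2k` one has `|ĝ₀| ≲ |ξ|⁻¹` and `|(|ξ|² - k²) ĝ₀| ≤ |ξ|`. The terms `a₁` and `b₁` equal
`ξ·Ŵ/|ξ|` and `ξ·V̂/|ξ|`, so the control of the divergences supplies the missing factor `|ξ|⁻²` in
the first summand; the integrand is at most a multiple of `⟨ξ⟩⁻¹` times the product of the densities
of the two graph norms, and Cauchy–Schwarz applies once more.
-/

/-- The power `⟨x⟩^{2t} = (1+|x|²)^t` of the Japanese bracket; `t = s` gives the weight of the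
`H^s` norm on the Fourier side. -/
def bracketPow {E : Type*} [NormedAddCommGroup E] (t : ℝ) (x : E) : ℝ := (1 + ‖x‖ ^ 2) ^ t

section BracketPow

variable {E : Type*} [NormedAddCommGroup E]

lemma bracketPow_pos (t : ℝ) (x : E) : 0 < bracketPow t x := by
  unfold bracketPow
  positivity

lemma bracketPow_add (t t' : ℝ) (x : E) :
    bracketPow (t + t') x = bracketPow t x * bracketPow t' x :=
  Real.rpow_add (by positivity) t t'

lemma bracketPow_neg (t : ℝ) (x : E) : bracketPow (-t) x = (bracketPow t x)⁻¹ :=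
  Real.rpow_neg (by positivity) t

lemma sqrt_bracketPow (t : ℝ) (x : E) : √(bracketPow t x) = bracketPow (t / 2) x := by
  rw [bracketPow, Real.sqrt_eq_rpow, ← Real.rpow_mul (by positivity), mul_one_div, bracketPow]

lemma bracketPow_le_of_exponent_le {t t' : ℝ} (h : t ≤ t') (x : E) :
    bracketPow t x ≤ bracketPow t' x :=
  Real.rpow_le_rpow_of_exponent_le (by linarith [sq_nonneg ‖x‖]) h

lemma bracketPow_le_one {t : ℝ} (ht : t ≤ 0) (x : E) : bracketPow t x ≤ 1 :=
  (bracketPow_le_of_exponent_le ht x).trans (Real.rpow_zero _).le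

lemma bracketPow_le_of_norm_le {t : ℝ} (ht : 0 ≤ t) {x y : E} (h : ‖x‖ ≤ ‖y‖) :
    bracketPow t x ≤ bracketPow t y := by
  unfold bracketPow
  gcongr

lemma continuous_bracketPow (t : ℝ) : Continuous (bracketPow t : E → ℝ) :=
  (by fun_prop : Continuous fun x : E ↦ 1 + ‖x‖ ^ 2).rpow_const fun x ↦
    .inl (zero_lt_one_add_norm_sq x).ne'

lemma bracketPow_mul_norm_mul_bracketPow_neg_mul_norm (t : ℝ) (z w : ℂ) (x : E) :
    bracketPow t x * (‖z‖ * (bracketPow (-t) x * ‖w‖)) = ‖z * w‖ := by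
  have := (bracketPow_pos t x).ne'
  rw [bracketPow_neg, norm_mul]
  field_simp

lemma bracketPow_mul_sq_bracketPow_neg_mul_norm (t : ℝ) (w : ℂ) (x : E) :
    bracketPow t x * (bracketPow (-t) x * ‖w‖) ^ 2 = bracketPow (-t) x * ‖w‖ ^ 2 := by
  rw [bracketPow_neg]
  field_simp

lemma one_add_norm_add_sq_le (x y : E) :
    1 + ‖x + y‖ ^ 2 ≤ 2 * (1 + ‖y‖ ^ 2) * (1 + ‖x‖ ^ 2) := by
  have htri : ‖x + y‖ ^ 2 ≤ (‖x‖ + ‖y‖) ^ 2 := by gcongr; exact norm_add_le x y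
  nlinarith [sq_nonneg (‖x‖ - ‖y‖), mul_nonneg (sq_nonneg ‖x‖) (sq_nonneg ‖y‖)]

lemma bracketPow_add_le (t : ℝ) (x y : E) :
    bracketPow t (x + y) ≤ 2 ^ |t| * bracketPow |t| y * bracketPow t x := by
  rcases le_total 0 t with ht | ht
  · simp only [bracketPow, abs_of_nonneg ht]
    rw [← Real.mul_rpow (by positivity) (by positivity),
      ← Real.mul_rpow (by positivity) (by positivity)]
    exact Real.rpow_le_rpow (by positivity) (one_add_norm_add_sq_le x y) ht
  · have hback : 1 + ‖x‖ ^ 2 ≤ 2 * (1 + ‖y‖ ^ 2) * (1 + ‖x + y‖ ^ 2) := by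
      simpa using one_add_norm_add_sq_le (x + y) (-y)
    obtain ⟨q, rfl⟩ : ∃ q, t = -q := ⟨-t, (neg_neg t).symm⟩
    have hq : 0 ≤ q := neg_nonpos.1 ht
    rw [abs_neg, abs_of_nonneg hq, bracketPow_neg, bracketPow_neg, ← div_eq_mul_inv,
      le_div_iff₀ (bracketPow_pos q x), inv_mul_le_iff₀ (bracketPow_pos q _)]
    unfold bracketPow
    rw [← Real.mul_rpow (by positivity) (by positivity), mul_comm,
      ← Real.mul_rpow (by positivity) (by positivity)]
    exact Real.rpow_le_rpow (by positivity) hback hq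

lemma inv_norm_le_bracketPow {r : ℝ} (hr : 0 < r) {x : E} (h : r ≤ ‖x‖) :
    ‖x‖⁻¹ ≤ (1 + r⁻¹) * bracketPow (-(1 / 2)) x := by
  have hx : 0 < ‖x‖ := hr.trans_le h
  have hbracket : bracketPow (1 / 2) x ≤ 1 + ‖x‖ := by
    rw [bracketPow, ← Real.sqrt_eq_rpow]
    exact Real.sqrt_le_iff.2 ⟨by positivity, by nlinarith⟩
  have hone : 1 ≤ r⁻¹ * ‖x‖ := by
    rwa [inv_mul_eq_div, one_le_div hr]
  rw [bracketPow_neg, ← div_eq_mul_inv, le_div_iff₀ (bracketPow_pos _ x), inv_mul_eq_div,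
    div_le_iff₀ hx]
  linarith

lemma tendsto_norm_pow_mul_bracketPow (d : ℕ) :
    Tendsto (fun x : E ↦ ‖x‖ ^ d * bracketPow (-(d + 1)) x) (Bornology.cobounded E) (𝓝 0) := by
  refine squeeze_zero (g := fun x : E ↦ (1 + ‖x‖ ^ 2)⁻¹)
    (fun x ↦ mul_nonneg (by positivity) (bracketPow_pos _ x).le) (fun x ↦ ?_) ?_
  · have hpow : ‖x‖ ^ d ≤ (1 + ‖x‖ ^ 2) ^ d := by
      gcongr
      nlinarith [sq_nonneg (‖x‖ - 1)]
    have hbracket : bracketPow (-(d + 1)) x = ((1 + ‖x‖ ^ 2) ^ d)⁻¹ * (1 + ‖x‖ ^ 2)⁻¹ := by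
      rw [bracketPow_neg, bracketPow, ← mul_inv, ← pow_succ]
      norm_cast
    rw [hbracket, ← mul_assoc]
    refine mul_le_of_le_one_left (by positivity) ?_
    rwa [← div_eq_mul_inv, div_le_one (by positivity)]
  · exact (tendsto_atTop_add_const_left _ 1
      ((tendsto_pow_atTop two_ne_zero).comp tendsto_norm_cobounded_atTop)).inv_tendsto_atTop

end BracketPow

section WeightedCauchySchwarz

variable {α : Type*} [MeasurableSpace α] {μ : Measure α} {w f g : α → ℝ}

lemma memLp_two_sqrt_mul (hw : AEStronglyMeasurable w μ) (hw0 : ∀ x, 0 ≤ w x)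
    (hf : AEStronglyMeasurable f μ) (hfi : Integrable (fun x ↦ w x * f x ^ 2) μ) :
    MemLp (fun x ↦ √(w x) * f x) 2 μ := by
  refine (memLp_two_iff_integrable_sq
    ((Real.continuous_sqrt.comp_aestronglyMeasurable hw).mul hf)).2 ?_
  simpa only [Pi.mul_apply, mul_pow, Real.sq_sqrt (hw0 _)] using hfi

lemma integrable_weight_mul_mul (hw : AEStronglyMeasurable w μ) (hw0 : ∀ x, 0 ≤ w x)
    (hf : AEStronglyMeasurable f μ) (hg : AEStronglyMeasurable g μ)
    (hfi : Integrable (fun x ↦ w x * f x ^ 2) μ) (hgi : Integrable (fun x ↦ w x * g x ^ 2) μ) :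
    Integrable (fun x ↦ w x * (f x * g x)) μ := by
  refine ((memLp_two_sqrt_mul hw hw0 hf hfi).integrable_mul
    (memLp_two_sqrt_mul hw hw0 hg hgi)).congr (ae_of_all _ fun x ↦ ?_)
  simp only [Pi.mul_apply]
  rw [mul_mul_mul_comm, Real.mul_self_sqrt (hw0 x)]

lemma integral_weight_mul_mul_le (hw : AEStronglyMeasurable w μ) (hw0 : ∀ x, 0 ≤ w x)
    (hf : AEStronglyMeasurable f μ) (hg : AEStronglyMeasurable g μ)
    (hfi : Integrable (fun x ↦ w x * f x ^ 2) μ) (hgi : Integrable (fun x ↦ w x * g x ^ 2) μ) :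
    ∫ x, w x * (f x * g x) ∂μ ≤ √(∫ x, w x * f x ^ 2 ∂μ) * √(∫ x, w x * g x ^ 2 ∂μ) := by
  have hF := memLp_two_sqrt_mul hw hw0 hf hfi
  have hG := memLp_two_sqrt_mul hw hw0 hg hgi
  have hsq (h : α → ℝ) (x : α) : ‖√(w x) * h x‖ ^ (2 : ℝ) = w x * h x ^ 2 := by
    rw [Real.rpow_ofNat, Real.norm_eq_abs, sq_abs, mul_pow, Real.sq_sqrt (hw0 x)]
  calc ∫ x, w x * (f x * g x) ∂μ
      = ∫ x, (√(w x) * f x) * (√(w x) * g x) ∂μ := by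
        refine integral_congr_ae (ae_of_all _ fun x ↦ ?_)
        simp only
        rw [mul_mul_mul_comm, Real.mul_self_sqrt (hw0 x)]
    _ ≤ ∫ x, ‖√(w x) * f x‖ * ‖√(w x) * g x‖ ∂μ :=
        integral_mono (hF.integrable_mul hG) (hF.norm.integrable_mul hG.norm) fun x ↦
          (le_abs_self _).trans (abs_mul _ _).le
    _ ≤ _ := by
        have hHolder := integral_mul_norm_le_Lp_mul_Lq (μ := μ) Real.HolderConjugate.two_two
          (by simpa using hF) (by simpa using hG)
        simpa only [hsq, ← Real.sqrt_eq_rpow] using hHolder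

end WeightedCauchySchwarz

section BracketPairing

variable {E : Type*} [NormedAddCommGroup E] [MeasurableSpace E] [OpensMeasurableSpace E]
  {μ : Measure E} {F G : E → ℂ} {t : ℝ}

lemma integrable_mul_of_bracketPow (hF : AEStronglyMeasurable F μ) (hG : AEStronglyMeasurable G μ)
    (hFi : Integrable (fun x ↦ bracketPow t x * ‖F x‖ ^ 2) μ)
    (hGi : Integrable (fun x ↦ bracketPow (-t) x * ‖G x‖ ^ 2) μ) :
    Integrable (fun x ↦ F x * G x) μ := by
  refine (integrable_norm_iff (hF.mul hG)).1 ?_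
  simpa only [Pi.mul_apply, bracketPow_mul_norm_mul_bracketPow_neg_mul_norm] using
    integrable_weight_mul_mul (w := bracketPow t) (f := fun x ↦ ‖F x‖)
      (g := fun x ↦ bracketPow (-t) x * ‖G x‖)
      (continuous_bracketPow t).aestronglyMeasurable (fun x ↦ (bracketPow_pos t x).le) hF.norm
      ((continuous_bracketPow (-t)).aestronglyMeasurable.mul hG.norm) hFi
      (by simpa only [bracketPow_mul_sq_bracketPow_neg_mul_norm] using hGi)

lemma norm_integral_mul_le_of_bracketPow
    (hF : AEStronglyMeasurable F μ) (hG : AEStronglyMeasurable G μ)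
    (hFi : Integrable (fun x ↦ bracketPow t x * ‖F x‖ ^ 2) μ)
    (hGi : Integrable (fun x ↦ bracketPow (-t) x * ‖G x‖ ^ 2) μ) :
    ‖∫ x, F x * G x ∂μ‖ ≤
      √(∫ x, bracketPow t x * ‖F x‖ ^ 2 ∂μ) * √(∫ x, bracketPow (-t) x * ‖G x‖ ^ 2 ∂μ) := by
  refine (norm_integral_le_integral_norm _).trans ?_
  simpa only [bracketPow_mul_norm_mul_bracketPow_neg_mul_norm,
      bracketPow_mul_sq_bracketPow_neg_mul_norm] using
    integral_weight_mul_mul_le (w := bracketPow t) (f := fun x ↦ ‖F x‖)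
      (g := fun x ↦ bracketPow (-t) x * ‖G x‖)
      (continuous_bracketPow t).aestronglyMeasurable (fun x ↦ (bracketPow_pos t x).le) hF.norm
      ((continuous_bracketPow (-t)).aestronglyMeasurable.mul hG.norm) hFi
      (by simpa only [bracketPow_mul_sq_bracketPow_neg_mul_norm] using hGi)

end BracketPairing

section ApproximateIdentity

variable {E : Type*} [NormedAddCommGroup E] [InnerProductSpace ℝ E]

lemma exists_norm_schwartz_le_bracketPow (K : 𝓢(E, ℂ)) (t : ℝ) :
    ∃ C, 0 ≤ C ∧ ∀ x, ‖K x‖ ≤ C * bracketPow t x := by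
  have hgrowth := Function.hasTemperateGrowth_one_add_norm_sq_rpow E (-t)
  let L : 𝓢(E, ℂ) := SchwartzMap.smulLeftCLM ℂ (fun x : E ↦ (1 + ‖x‖ ^ 2) ^ (-t)) K
  refine ⟨SchwartzMap.seminorm ℝ 0 0 L, apply_nonneg _ _, fun x ↦ ?_⟩
  have hL : ‖L x‖ ≤ SchwartzMap.seminorm ℝ 0 0 L := SchwartzMap.norm_le_seminorm ℝ L x
  have hLx : ‖L x‖ = bracketPow (-t) x * ‖K x‖ := by
    simp only [L]
    rw [SchwartzMap.smulLeftCLM_apply_apply hgrowth, norm_smul,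
      Real.norm_of_nonneg (by positivity), bracketPow]
  rwa [hLx, bracketPow_neg, inv_mul_le_iff₀ (bracketPow_pos t x), mul_comm] at hL

lemma exists_norm_schwartz_smul_le (K : 𝓢(E, ℂ)) (n : ℝ) {m : ℝ} (hm : 0 ≤ m) :
    ∃ C, ∀ c : ℝ, 1 ≤ c → ∀ x,
      ‖K (c • x)‖ ≤ C * bracketPow (-n) (c • x) * bracketPow (-m) x := by
  obtain ⟨C, hC, hK⟩ := exists_norm_schwartz_le_bracketPow K (-n + -m)
  refine ⟨C, fun c hc x ↦ (hK (c • x)).trans ?_⟩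
  have hnorm : ‖x‖ ≤ ‖c • x‖ := by
    rw [norm_smul, Real.norm_of_nonneg (zero_le_one.trans hc)]
    exact le_mul_of_one_le_left (norm_nonneg x) hc
  have hdecay : bracketPow (-m) (c • x) ≤ bracketPow (-m) x := by
    rw [bracketPow_neg, bracketPow_neg]
    exact inv_anti₀ (bracketPow_pos m x) (bracketPow_le_of_norm_le hm hnorm)
  have := bracketPow_pos (-n) (c • x)
  rw [bracketPow_add, mul_assoc]
  gcongr

variable [FiniteDimensional ℝ E] [MeasurableSpace E] [BorelSpace E]

lemma integrable_bracketPow {t : ℝ} (ht : Module.finrank ℝ E < -(2 * t)) :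
    Integrable (bracketPow t : E → ℝ) := by
  refine (integrable_rpow_neg_one_add_norm_sq (μ := volume) ht).congr (ae_of_all _ fun x ↦ ?_)
  simp only [bracketPow]
  ring_nf

lemma integrable_bracketPow_mul_norm_schwartz_sq (K : 𝓢(E, ℂ)) (t : ℝ) :
    Integrable fun x ↦ bracketPow t x * ‖K x‖ ^ 2 := by
  obtain ⟨C, -, hC⟩ := exists_norm_schwartz_le_bracketPow K (-t)
  refine (K.integrable.norm.const_mul C).mono'
    (by have := continuous_bracketPow (E := E) t; fun_prop : Continuous _).aestronglyMeasurable
    (ae_of_all _ fun x ↦ ?_)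
  have hpos := bracketPow_pos t x
  have hx := hC x
  rw [bracketPow_neg, ← div_eq_mul_inv, le_div_iff₀ hpos] at hx
  rw [Real.norm_of_nonneg (by positivity)]
  calc bracketPow t x * ‖K x‖ ^ 2 = (‖K x‖ * bracketPow t x) * ‖K x‖ := by ring
    _ ≤ C * ‖K x‖ := by gcongr

lemma tendsto_integral_dilate_bracketPow_mul {g : E → ℝ} (hg : Integrable g)
    (hg0 : ContinuousAt g 0) :
    Tendsto (fun c : ℝ ↦ ∫ x, c ^ Module.finrank ℝ E *
        bracketPow (-(Module.finrank ℝ E + 1)) (c • x) * g x) atTop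
      (𝓝 ((∫ x : E, bracketPow (-(Module.finrank ℝ E + 1)) x) * g 0)) := by
  set φ : E → ℝ := bracketPow (-(Module.finrank ℝ E + 1))
  have hφ : Integrable φ := integrable_bracketPow (by linarith)
  have hI : 0 < ∫ x, φ x := integral_pos_of_integrable_nonneg_nonzero (x := 0)
    (continuous_bracketPow _) hφ (fun x ↦ (bracketPow_pos _ x).le) (bracketPow_pos _ 0).ne'
  have hlim := tendsto_integral_comp_smul_smul_of_integrable (μ := (volume : Measure E))
    (φ := fun x ↦ (∫ y, φ y)⁻¹ * φ x)
    (fun x ↦ mul_nonneg (inv_nonneg.2 hI.le) (bracketPow_pos _ x).le)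
    (by rw [integral_const_mul, inv_mul_cancel₀ hI.ne'])
    (by simpa only [mul_left_comm, mul_zero] using
      (tendsto_norm_pow_mul_bracketPow (E := E) (Module.finrank ℝ E)).const_mul (∫ y, φ y)⁻¹)
    hg hg0
  refine (hlim.const_mul (∫ x, φ x)).congr fun c ↦ ?_
  rw [← integral_const_mul]
  refine integral_congr_ae (ae_of_all _ fun x ↦ ?_)
  simp only [smul_eq_mul]
  field_simp

lemma integrable_bracketPow_mul_norm_sub_const {G : E → ℂ} {r m : ℝ} (hrm : r ≤ m)
    (hm : Module.finrank ℝ E < 2 * m) (hG : AEStronglyMeasurable G)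
    (hGi : Integrable fun x ↦ bracketPow (-r) x * ‖G x‖) (z : ℂ) :
    Integrable fun x ↦ bracketPow (-m) x * ‖G x - z‖ := by
  refine (hGi.add ((integrable_bracketPow (E := E) (t := -m) (by linarith)).mul_const ‖z‖)).mono'
    ((continuous_bracketPow (-m)).aestronglyMeasurable.mul (hG.sub aestronglyMeasurable_const).norm)
    (ae_of_all _ fun x ↦ ?_)
  have hr : bracketPow (-m) x ≤ bracketPow (-r) x :=
    bracketPow_le_of_exponent_le (neg_le_neg hrm) x
  have hpos := bracketPow_pos (-m) x
  rw [Real.norm_of_nonneg (by positivity)]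
  calc bracketPow (-m) x * ‖G x - z‖ ≤ bracketPow (-m) x * (‖G x‖ + ‖z‖) := by
        gcongr; exact norm_sub_le _ _
    _ = bracketPow (-m) x * ‖G x‖ + bracketPow (-m) x * ‖z‖ := mul_add _ _ _
    _ ≤ bracketPow (-r) x * ‖G x‖ + bracketPow (-m) x * ‖z‖ := by gcongr

lemma integrable_mul_dilate_schwartz (K : 𝓢(E, ℂ)) {H : E → ℂ} {m : ℝ} (hm : 0 ≤ m)
    (hH : AEStronglyMeasurable H) (hHi : Integrable fun x ↦ bracketPow (-m) x * ‖H x‖)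
    {c : ℝ} (hc : 1 ≤ c) : Integrable fun x ↦ H x * K (c • x) := by
  obtain ⟨C, hK⟩ := exists_norm_schwartz_smul_le K 0 hm
  refine (hHi.const_mul C).mono'
    (hH.mul (K.continuous.comp (continuous_const_smul c)).aestronglyMeasurable)
    (ae_of_all _ fun x ↦ ?_)
  rw [norm_mul]
  calc ‖H x‖ * ‖K (c • x)‖ ≤ ‖H x‖ * (C * bracketPow (-0) (c • x) * bracketPow (-m) x) := by
        gcongr; exact hK c hc x
    _ = C * (bracketPow (-m) x * ‖H x‖) := by simp only [bracketPow, neg_zero, Real.rpow_zero]; ring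

/-- Decay of `K` lets `|K|` be dominated by a nonnegative approximate identity times a weight that
makes `H` integrable. -/
lemma tendsto_integral_mul_dilate_of_apply_zero (K : 𝓢(E, ℂ)) {H : E → ℂ} {m : ℝ} (hm : 0 ≤ m)
    (hHi : Integrable fun x ↦ bracketPow (-m) x * ‖H x‖)
    (hH0 : ContinuousAt H 0) (hzero : H 0 = 0) :
    Tendsto (fun c : ℝ ↦ ∫ x, ((c ^ Module.finrank ℝ E : ℝ) : ℂ) * (H x * K (c • x))) atTop
      (𝓝 0) := by
  obtain ⟨C, hK⟩ := exists_norm_schwartz_smul_le K (Module.finrank ℝ E + 1) hm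
  have hlim := (tendsto_integral_dilate_bracketPow_mul hHi
    ((continuous_bracketPow (-m)).continuousAt.mul hH0.norm)).const_mul C
  simp only [hzero, norm_zero, mul_zero] at hlim
  refine squeeze_zero_norm' ((eventually_ge_atTop 1).mono fun c hc ↦ ?_) hlim
  rw [← integral_const_mul]
  have hbounded (x : E) : ‖bracketPow (-(Module.finrank ℝ E + 1)) (c • x)‖ ≤ 1 := by
    rw [Real.norm_of_nonneg (bracketPow_pos _ _).le]
    exact bracketPow_le_one (neg_nonpos.2 (by positivity)) _
  have hdom := ((hHi.bdd_mul ((continuous_bracketPow _).comp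
    (continuous_const_smul c)).aestronglyMeasurable (ae_of_all _ hbounded)).const_mul
      (c ^ Module.finrank ℝ E)).const_mul C
  refine norm_integral_le_of_norm_le
    (by simpa only [Function.comp_apply, mul_assoc] using hdom) (ae_of_all _ fun x ↦ ?_)
  have := hK c hc x
  rw [norm_mul, norm_mul, Complex.norm_real, Real.norm_of_nonneg (by positivity)]
  calc c ^ Module.finrank ℝ E * (‖H x‖ * ‖K (c • x)‖)
      ≤ c ^ Module.finrank ℝ E * (‖H x‖ * (C * bracketPow (-(Module.finrank ℝ E + 1)) (c • x) *
          bracketPow (-m) x)) := by gcongr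
    _ = _ := by ring

lemma tendsto_integral_mul_dilate_schwartz_zero (K : 𝓢(E, ℂ)) {G : E → ℂ} {r : ℝ}
    (hG : AEStronglyMeasurable G) (hGi : Integrable fun x ↦ bracketPow (-r) x * ‖G x‖)
    (hG0 : ContinuousAt G 0) :
    Tendsto (fun c : ℝ ↦ ∫ x, ((c ^ Module.finrank ℝ E : ℝ) : ℂ) * (G x * K (c • x))) atTop
      (𝓝 (G 0 * ∫ x, K x)) := by
  set d := Module.finrank ℝ E
  have hm : (0 : ℝ) ≤ max r (d + 1) := le_max_of_le_right (by positivity)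
  have hHi := integrable_bracketPow_mul_norm_sub_const (le_max_left r (d + 1))
    (by linarith [le_max_right r (d + 1 : ℝ), Nat.cast_nonneg (α := ℝ) d]) hG hGi (G 0)
  have hH : AEStronglyMeasurable fun x ↦ G x - G 0 := hG.sub aestronglyMeasurable_const
  have hlim := (tendsto_integral_mul_dilate_of_apply_zero K hm hHi
    (hG0.sub continuousAt_const) (sub_self _)).add_const (G 0 * ∫ x, K x)
  rw [zero_add] at hlim
  refine hlim.congr' ((eventually_ge_atTop 1).mono fun c hc ↦ ?_)
  have hc0 : 0 < c := zero_lt_one.trans_le hc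
  have hKc : Integrable fun x ↦ K (c • x) := K.integrable.comp_smul hc0.ne'
  have hscale : ((c ^ d : ℝ) : ℂ) * ∫ x, K (c • x) = ∫ x, K x := by
    rw [Measure.integral_comp_smul_of_nonneg _ _ _ (hR := hc0.le), Complex.real_smul, ← mul_assoc,
      ← Complex.ofReal_mul, mul_inv_cancel₀ (pow_pos hc0 _).ne', Complex.ofReal_one, one_mul]
  simp only [integral_const_mul]
  rw [← hscale, mul_left_comm, ← mul_add,
    ← integral_const_mul, ← integral_add
      (integrable_mul_dilate_schwartz K hm hH hHi hc) (hKc.const_mul _)]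
  simp only [← add_mul, sub_add_cancel]
  rfl

lemma integrable_bracketPow_mul_norm_comp_add_right {G : E → ℂ} {r : ℝ}
    (hG : AEStronglyMeasurable G) (hGi : Integrable fun x ↦ bracketPow r x * ‖G x‖) (y : E) :
    Integrable fun x ↦ bracketPow r x * ‖G (x + y)‖ := by
  refine ((hGi.comp_add_right y).const_mul (2 ^ |r| * bracketPow |r| (-y))).mono'
    ((continuous_bracketPow r).aestronglyMeasurable.mul
      (hG.comp_quasiMeasurePreserving
        (quasiMeasurePreserving_add_right volume y)).norm) (ae_of_all _ fun x ↦ ?_)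
  have hPeetre := bracketPow_add_le r (x + y) (-y)
  rw [add_neg_cancel_right] at hPeetre
  have := bracketPow_pos r x
  rw [Real.norm_of_nonneg (by positivity), ← mul_assoc]
  gcongr

lemma tendsto_integral_mul_dilate_schwartz (K : 𝓢(E, ℂ)) {G : E → ℂ} {r : ℝ} {x₀ : E}
    (hG : AEStronglyMeasurable G) (hGi : Integrable fun x ↦ bracketPow (-r) x * ‖G x‖)
    (hG₀ : ContinuousAt G x₀) :
    Tendsto (fun c : ℝ ↦ ∫ x, ((c ^ Module.finrank ℝ E : ℝ) : ℂ) * (G x * K (c • (x - x₀))))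
      atTop (𝓝 (G x₀ * ∫ x, K x)) := by
  have hlim := tendsto_integral_mul_dilate_schwartz_zero K
    (hG.comp_quasiMeasurePreserving (quasiMeasurePreserving_add_right volume x₀))
    (integrable_bracketPow_mul_norm_comp_add_right hG hGi x₀)
    (ContinuousAt.comp (by rwa [zero_add]) (by fun_prop))
  simp only [Function.comp_apply, zero_add] at hlim
  refine hlim.congr fun c ↦ ?_
  have hshift := integral_add_right_eq_self (μ := (volume : Measure E))
    (fun x ↦ ((c ^ Module.finrank ℝ E : ℝ) : ℂ) * (G x * K (c • (x - x₀)))) x₀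
  simpa only [add_sub_cancel_right] using hshift

end ApproximateIdentity

section TestFunctions

lemma rdot_eq_inner (x ξ : R2) : rdot x ξ = inner ℝ x ξ := by
  simp only [rdot, PiLp.inner_apply, Fin.sum_univ_two]
  simp [mul_comm]

lemma testFT_modulate_dilate (f : R2 → ℂ) {c : ℝ} (hc : 0 < c) (ξ₀ ξ : R2) :
    testFT (fun x ↦ Complex.exp (-(Complex.I * (rdot x ξ₀ : ℂ))) * f (c⁻¹ • x)) ξ =
      ((c ^ 2 : ℝ) : ℂ) * testFT f (c • (ξ - ξ₀)) := by
  have hscale := Measure.integral_comp_smul_of_nonneg (volume : Measure R2)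
    (fun x ↦ Complex.exp (Complex.I * (rdot x (c • (ξ - ξ₀)) : ℂ)) * f x) c⁻¹
    (hR := inv_nonneg.2 hc.le)
  rw [finrank_euclideanSpace_fin, inv_pow, inv_inv, Complex.real_smul] at hscale
  unfold testFT
  rw [← hscale]
  refine integral_congr_ae (ae_of_all _ fun x ↦ ?_)
  have hphase : rdot (c⁻¹ • x) (c • (ξ - ξ₀)) = rdot x ξ - rdot x ξ₀ := by
    simp only [rdot, PiLp.smul_apply, PiLp.sub_apply, smul_eq_mul]
    field_simp
    ring
  simp only
  rw [hphase, ← mul_assoc, ← Complex.exp_add]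
  congr 2
  push_cast
  ring

/-- `testFT` on Schwartz functions. The dilation by `(2π)⁻¹` converts Mathlib's inverse Fourier
transform, with phase `e^{2πi x·ξ}`, to the phase `e^{i x·ξ}`. -/
def testFTSchwartz : 𝓢(R2, ℂ) →L[ℂ] 𝓢(R2, ℂ) :=
  (SchwartzMap.compCLMOfContinuousLinearEquiv ℂ
    (ContinuousLinearEquiv.smulLeft (Units.mk0 (2 * π)⁻¹ (by positivity)) : R2 ≃L[ℝ] R2)).comp
    (FourierTransform.fourierInvCLM ℂ 𝓢(R2, ℂ))

lemma testFTSchwartz_apply (f : 𝓢(R2, ℂ)) (ξ : R2) :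
    testFTSchwartz f ξ = (𝓕⁻ f : 𝓢(R2, ℂ)) ((2 * π)⁻¹ • ξ) :=
  rfl

lemma coe_testFTSchwartz (f : 𝓢(R2, ℂ)) : ⇑(testFTSchwartz f) = testFT f := by
  ext ξ
  rw [testFTSchwartz_apply, SchwartzMap.fourierInv_coe, Real.fourierInv_eq']
  refine integral_congr_ae (ae_of_all _ fun x ↦ ?_)
  have hphase : 2 * π * inner ℝ x ((2 * π)⁻¹ • ξ) = rdot x ξ := by
    rw [inner_smul_right, rdot_eq_inner, mul_inv_cancel_left₀ (by positivity)]
  simp only [smul_eq_mul]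
  rw [hphase, mul_comm Complex.I]

lemma integral_testFTSchwartz (f : 𝓢(R2, ℂ)) :
    ∫ ξ, testFTSchwartz f ξ = (((2 * π) ^ 2 : ℝ) : ℂ) * f 0 := by
  have hinv : ∫ ξ, (𝓕⁻ f : 𝓢(R2, ℂ)) ξ = f 0 := by
    have h0 : (𝓕 (𝓕⁻ f : 𝓢(R2, ℂ)) : 𝓢(R2, ℂ)) 0 = f 0 := by
      rw [FourierTransform.fourier_fourierInv_eq]
    rw [← h0, SchwartzMap.fourier_coe, Real.fourier_eq']
    simp
  simp only [testFTSchwartz_apply]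
  rw [Measure.integral_comp_smul_of_nonneg _ _ _ (hR := by positivity), hinv,
    finrank_euclideanSpace_fin, inv_pow, inv_inv, Complex.real_smul]

end TestFunctions

namespace HTildeElt

variable {s : ℝ} {Γ : Set R2}

lemma integrable_mul_schwartz (u : HTildeElt s Γ) (g : 𝓢(R2, ℂ)) :
    Integrable fun ξ ↦ u.ft ξ * g ξ :=
  integrable_mul_of_bracketPow u.cont.aestronglyMeasurable g.continuous.aestronglyMeasurable u.mem
    (integrable_bracketPow_mul_norm_schwartz_sq g (-s))

lemma integrable_bracketPow_mul_norm_ft (u : HTildeElt s Γ) :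
    Integrable fun ξ ↦ bracketPow (-(|s| + 1)) ξ * ‖u.ft ξ‖ := by
  have hweight : Integrable fun ξ : R2 ↦
      bracketPow (-s) ξ * ‖((bracketPow (-(|s| + 1)) ξ : ℝ) : ℂ)‖ ^ 2 := by
    have hexp : Integrable fun ξ : R2 ↦ bracketPow (-s + (-(|s| + 1) + -(|s| + 1))) ξ :=
      integrable_bracketPow (by
        rw [finrank_euclideanSpace_fin]
        push_cast
        linarith [neg_abs_le s, abs_nonneg s])
    simpa only [Complex.norm_real, Real.norm_of_nonneg (bracketPow_pos _ _).le, sq,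
      bracketPow_add] using hexp
  refine (integrable_mul_of_bracketPow u.cont.aestronglyMeasurable
    (Complex.continuous_ofReal.comp (continuous_bracketPow _)).aestronglyMeasurable u.mem
    hweight).norm.congr (ae_of_all _ fun ξ ↦ ?_)
  simp only [Function.comp_apply, norm_mul, Complex.norm_real,
    Real.norm_of_nonneg (bracketPow_pos _ ξ).le, mul_comm]

lemma integral_ft_mul_testFT_congr (u : HTildeElt s Γ) {φ ψ : R2 → ℂ}
    (hφ : ContDiff ℝ ∞ φ) (hφc : HasCompactSupport φ)
    (hψ : ContDiff ℝ ∞ ψ) (hψc : HasCompactSupport ψ)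
    {U : Set R2} (hU : IsOpen U) (hΓU : closure Γ ⊆ U) (h : Set.EqOn φ ψ U) :
    ∫ ξ, u.ft ξ * testFT φ ξ = ∫ ξ, u.ft ξ * testFT ψ ξ := by
  have hdisjoint : tsupport (φ - ψ) ∩ closure Γ = ∅ := by
    refine Set.disjoint_iff_inter_eq_empty.1 (Disjoint.mono_right hΓU ?_)
    refine Disjoint.closure_left (Set.disjoint_left.2 fun x hx hxU ↦ hx ?_) hU
    exact sub_eq_zero.2 (h hxU)
  have hzero := u.supp (φ - ψ) (hφ.sub hψ) (hφc.sub hψc) hdisjoint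
  let f : 𝓢(R2, ℂ) := hφc.toSchwartzMap hφ
  let g : 𝓢(R2, ℂ) := hψc.toSchwartzMap hψ
  have hlinear : testFT (φ - ψ) = testFT φ - testFT ψ := by
    change testFT ⇑(f - g) = testFT f - testFT g
    simp only [← coe_testFTSchwartz, map_sub]
    rfl
  have hf : Integrable fun ξ ↦ u.ft ξ * testFT f ξ :=
    coe_testFTSchwartz f ▸ u.integrable_mul_schwartz (testFTSchwartz f)
  have hg : Integrable fun ξ ↦ u.ft ξ * testFT g ξ :=
    coe_testFTSchwartz g ▸ u.integrable_mul_schwartz (testFTSchwartz g)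
  simp only [hlinear, Pi.sub_apply, mul_sub] at hzero
  exact sub_eq_zero.1 ((integral_sub hf hg).symm.trans hzero)

/-- For `c ≥ 1` the cutoffs `χ` and `χ(c⁻¹ ·)` are both `1` near `closure Γ`. -/
lemma integral_ft_mul_dilate_testFT (u : HTildeElt s Γ) {χ : R2 → ℂ} (hχ : ContDiff ℝ ∞ χ)
    (hχc : HasCompactSupport χ) {R : ℝ} (hΓR : closure Γ ⊆ Metric.ball 0 R)
    (hχR : Set.EqOn χ 1 (Metric.ball 0 R)) (ξ₀ : R2) {c : ℝ} (hc : 1 ≤ c) :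
    ∫ ξ, ((c ^ 2 : ℝ) : ℂ) * (u.ft ξ * testFT χ (c • (ξ - ξ₀))) =
      ∫ ξ, u.ft ξ * testFT χ (ξ - ξ₀) := by
  have hc0 : 0 < c := zero_lt_one.trans_le hc
  let e : R2 → ℂ := fun x ↦ Complex.exp (-(Complex.I * (rdot x ξ₀ : ℂ)))
  have he : ContDiff ℝ ∞ e := by
    have hphase : ContDiff ℝ ∞ fun x ↦ rdot x ξ₀ := by
      unfold rdot
      fun_prop
    exact (contDiff_const.mul (Complex.ofRealCLM.contDiff.comp hphase)).neg.cexp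
  have hdilate (a : ℝ) (ha : 1 ≤ a) : Set.EqOn (fun x ↦ χ (a⁻¹ • x)) 1 (Metric.ball 0 R) := by
    intro x hx
    refine hχR (mem_ball_zero_iff.2 (lt_of_le_of_lt ?_ (mem_ball_zero_iff.1 hx)))
    rw [norm_smul, Real.norm_of_nonneg (inv_nonneg.2 (zero_le_one.trans ha))]
    exact mul_le_of_le_one_left (norm_nonneg x) (inv_le_one_of_one_le₀ ha)
  have hsmooth (a : ℝ) : ContDiff ℝ ∞ fun x ↦ e x * χ (a⁻¹ • x) :=
    he.mul (hχ.comp (contDiff_const_smul _))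
  have hcompact (a : ℝ) (ha : 1 ≤ a) : HasCompactSupport fun x ↦ e x * χ (a⁻¹ • x) :=
    (hχc.comp_smul (inv_ne_zero (zero_lt_one.trans_le ha).ne')).mul_left
  have hagree := u.integral_ft_mul_testFT_congr (hsmooth c) (hcompact c hc) (hsmooth 1)
    (hcompact 1 le_rfl) Metric.isOpen_ball hΓR fun x hx ↦
      congrArg (e x * ·) ((hdilate c hc hx).trans (hdilate 1 le_rfl hx).symm)
  simp only [e, testFT_modulate_dilate χ hc0, testFT_modulate_dilate χ one_pos, one_pow,
    Complex.ofReal_one, one_mul, one_smul] at hagree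
  simpa only [mul_left_comm] using hagree

end HTildeElt

lemma exists_contDiff_hasCompactSupport_eqOn_one_ball (R : ℝ) :
    ∃ χ : R2 → ℂ, ContDiff ℝ ∞ χ ∧ HasCompactSupport χ ∧ Set.EqOn χ 1 (Metric.ball 0 R) := by
  let b : ContDiffBump (0 : R2) := ⟨max R 1, max R 1 + 1, by positivity, by linarith⟩
  refine ⟨fun x ↦ (b x : ℂ), Complex.ofRealCLM.contDiff.comp b.contDiff,
    b.hasCompactSupport.comp_left (g := fun t : ℝ ↦ (t : ℂ)) Complex.ofReal_zero, fun x hx ↦ ?_⟩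
  have hone : b x = 1 := b.one_of_mem_closedBall
    (Metric.ball_subset_closedBall (Metric.ball_subset_ball (le_max_left R 1) hx))
  simp only [hone, Complex.ofReal_one, Pi.one_apply]

lemma exists_schwartz_reproducing_kernel {Γ : Set R2} (hΓ : Bornology.IsBounded Γ) :
    ∃ K : 𝓢(R2, ℂ), ∀ (s : ℝ) (u : HTildeElt s Γ) (ξ₀ : R2),
      u.ft ξ₀ = ∫ ξ, u.ft ξ * K (ξ - ξ₀) := by
  obtain ⟨R, hR, hΓR⟩ := hΓ.closure.subset_ball_lt 0 (0 : R2)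
  obtain ⟨χ, hχ, hχc, hχR⟩ := exists_contDiff_hasCompactSupport_eqOn_one_ball R
  let f : 𝓢(R2, ℂ) := hχc.toSchwartzMap hχ
  refine ⟨(((2 * π) ^ 2 : ℝ) : ℂ)⁻¹ • testFTSchwartz f, fun s u ξ₀ ↦ ?_⟩
  have hf0 : f 0 = 1 := hχR (Metric.mem_ball_self hR)
  have hlim := tendsto_integral_mul_dilate_schwartz (testFTSchwartz f) (x₀ := ξ₀)
    u.cont.aestronglyMeasurable u.integrable_bracketPow_mul_norm_ft u.cont.continuousAt
  rw [integral_testFTSchwartz, hf0, mul_one, coe_testFTSchwartz, finrank_euclideanSpace_fin] at hlim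
  have hconst : ∫ ξ, u.ft ξ * testFT χ (ξ - ξ₀) = u.ft ξ₀ * (((2 * π) ^ 2 : ℝ) : ℂ) :=
    tendsto_nhds_unique (tendsto_const_nhds.congr' ((eventually_ge_atTop 1).mono fun c hc ↦
      (u.integral_ft_mul_dilate_testFT hχ hχc hΓR hχR ξ₀ hc).symm)) hlim
  simp only [smul_apply, coe_testFTSchwartz, smul_eq_mul, mul_left_comm (u.ft _),
    integral_const_mul]
  rw [show ⇑f = χ from rfl, hconst]
  field_simp

lemma sqrt_integral_bracketPow_eq (s : ℝ) (F : R2 → ℂ) :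
    √(∫ ξ, bracketPow s ξ * ‖F ξ‖ ^ 2) = 2 * π * wnorm s F := by
  unfold wnorm wnormSq
  rw [Real.sqrt_mul (by positivity), Real.sqrt_inv, Real.sqrt_sq (by positivity),
    mul_inv_cancel_left₀ (by positivity)]
  rfl

lemma sqrt_integral_bracketPow_mul_norm_schwartz_sub_sq_le (K : 𝓢(R2, ℂ)) (t : ℝ) (ξ₀ : R2) :
    √(∫ ξ, bracketPow t ξ * ‖K (ξ - ξ₀)‖ ^ 2) ≤
      √(2 ^ |t| * ∫ ξ, bracketPow t ξ * ‖K ξ‖ ^ 2) * bracketPow (|t| / 2) ξ₀ := by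
  rw [← sqrt_bracketPow, ← Real.sqrt_mul
    (mul_nonneg (by positivity)
      (integral_nonneg fun ξ ↦ mul_nonneg (bracketPow_pos _ _).le (sq_nonneg _)))]
  refine Real.sqrt_le_sqrt ?_
  have hint := integrable_bracketPow_mul_norm_schwartz_sq K t
  rw [← integral_add_right_eq_self _ ξ₀]
  simp only [add_sub_cancel_right]
  calc ∫ ξ, bracketPow t (ξ + ξ₀) * ‖K ξ‖ ^ 2
      ≤ ∫ ξ, 2 ^ |t| * bracketPow |t| ξ₀ * (bracketPow t ξ * ‖K ξ‖ ^ 2) := by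
        refine integral_mono_of_nonneg
          (ae_of_all _ fun ξ ↦ mul_nonneg (bracketPow_pos _ _).le (sq_nonneg _))
          (hint.const_mul _) (ae_of_all _ fun ξ ↦ ?_)
        simp only
        rw [← mul_assoc]
        gcongr
        exact bracketPow_add_le t ξ ξ₀
    _ = 2 ^ |t| * (∫ ξ, bracketPow t ξ * ‖K ξ‖ ^ 2) * bracketPow |t| ξ₀ := by
        rw [integral_const_mul]
        ring

theorem exists_norm_ft_le_wnorm {Γ : Set R2} (hΓ : Bornology.IsBounded Γ) (s : ℝ) :
    ∃ C, 0 ≤ C ∧ ∀ (u : HTildeElt s Γ) (ξ : R2),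
      ‖u.ft ξ‖ ≤ C * bracketPow (|s| / 2) ξ * wnorm s u.ft := by
  obtain ⟨K, hK⟩ := exists_schwartz_reproducing_kernel hΓ
  set J := √(2 ^ |s| * ∫ ξ, bracketPow (-s) ξ * ‖K ξ‖ ^ 2)
  refine ⟨2 * π * J, by positivity, fun u ξ₀ ↦ ?_⟩
  have hKξ₀ : Integrable fun ξ ↦ bracketPow (-s) ξ * ‖K (ξ - ξ₀)‖ ^ 2 :=
    integrable_bracketPow_mul_norm_schwartz_sq (K.compSubConstCLM ℂ ξ₀) (-s)
  have hweight := sqrt_integral_bracketPow_mul_norm_schwartz_sub_sq_le K (-s) ξ₀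
  rw [abs_neg] at hweight
  rw [hK s u ξ₀]
  calc ‖∫ ξ, u.ft ξ * K (ξ - ξ₀)‖
      ≤ √(∫ ξ, bracketPow s ξ * ‖u.ft ξ‖ ^ 2) *
          √(∫ ξ, bracketPow (-s) ξ * ‖K (ξ - ξ₀)‖ ^ 2) :=
        norm_integral_mul_le_of_bracketPow u.cont.aestronglyMeasurable
          (K.continuous.comp (continuous_id.sub continuous_const)).aestronglyMeasurable u.mem hKξ₀
    _ ≤ 2 * π * wnorm s u.ft * (J * bracketPow (|s| / 2) ξ₀) := by
        rw [sqrt_integral_bracketPow_eq]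
        gcongr
        exact mul_nonneg (by positivity) (Real.sqrt_nonneg _)
    _ = 2 * π * J * bracketPow (|s| / 2) ξ₀ * wnorm s u.ft := by ring

section Symbol

variable {k : ℝ} {ξ : R2}

lemma norm_g0hat (hk : 0 < k) (ξ : R2) : ‖g0hat k ξ‖ = (√|‖ξ‖ ^ 2 - k ^ 2|)⁻¹ := by
  unfold g0hat
  split_ifs with h
  · have hlt : ‖ξ‖ ^ 2 < k ^ 2 := by gcongr
    rw [norm_div, Complex.norm_I, Complex.norm_real, Real.norm_of_nonneg (Real.sqrt_nonneg _),
      one_div, abs_of_neg (sub_neg.2 hlt), neg_sub]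
  · have hle : k ^ 2 ≤ ‖ξ‖ ^ 2 := by
      gcongr
      exact not_lt.1 h
    rw [norm_div, norm_one, Complex.norm_real, Real.norm_of_nonneg (Real.sqrt_nonneg _),
      one_div, abs_of_nonneg (sub_nonneg.2 hle)]

lemma measurable_g0hat (k : ℝ) : Measurable (g0hat k) := by
  unfold g0hat
  exact Measurable.ite (measurableSet_lt (by fun_prop) (by fun_prop)) (by fun_prop) (by fun_prop)

lemma integrableOn_inv_sqrt_abs_sub (a b c : ℝ) :
    IntegrableOn (fun y ↦ (√|y - a|)⁻¹) (Set.Ioo b c) := by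
  set r := |b - a| + |c - a| + 1
  have hr : 0 < r := by positivity
  have hzero : IntegrableOn (fun y : ℝ ↦ (√‖y‖)⁻¹) (Metric.ball 0 r) := by
    rw [integrableOn_fun_norm_addHaar volume (f := fun y ↦ (√y)⁻¹)]
    simp only [Module.finrank_self, tsub_self, pow_zero, one_smul]
    refine ((intervalIntegral.integrableOn_Ioo_rpow_iff (s := -(1 / 2)) hr).2
      (by norm_num)).congr_fun (fun y hy ↦ ?_) measurableSet_Ioo
    simp only [Real.rpow_neg hy.1.le, Real.sqrt_eq_rpow]
  have hshift := ((measurePreserving_sub_right volume a).integrableOn_comp_preimage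
    (measurableEmbedding_subRight a)).2 hzero
  refine hshift.mono_set fun y hy ↦ mem_ball_zero_iff.2 (abs_lt.2 ⟨?_, ?_⟩)
  · linarith [hy.1, neg_abs_le (b - a), abs_nonneg (c - a)]
  · linarith [hy.2, le_abs_self (c - a), abs_nonneg (b - a)]

lemma inv_sqrt_abs_sq_sub_sq_le (hk : 0 < k) {y : ℝ} (hy : 0 ≤ y) :
    (√|y ^ 2 - k ^ 2|)⁻¹ ≤ (√k)⁻¹ * (√|y - k|)⁻¹ := by
  rcases eq_or_ne y k with rfl | hyk
  · simp
  have hle : k * |y - k| ≤ |y ^ 2 - k ^ 2| := by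
    rw [sq_sub_sq, abs_mul, abs_of_pos (by positivity : 0 < y + k)]
    gcongr
    linarith
  rw [← mul_inv, ← Real.sqrt_mul hk.le]
  gcongr

/-- In polar coordinates the singularity of `ĝ₀` on the circle `|ξ| = k` is `| |ξ| - k |^{-1/2}`. -/
lemma integrableOn_norm_g0hat (hk : 0 < k) (R : ℝ) :
    IntegrableOn (fun ξ ↦ ‖g0hat k ξ‖) (Metric.ball 0 R) := by
  simp only [norm_g0hat hk]
  rw [integrableOn_fun_norm_addHaar volume (f := fun y ↦ (√|y ^ 2 - k ^ 2|)⁻¹),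
    finrank_euclideanSpace_fin]
  refine ((integrableOn_inv_sqrt_abs_sub k 0 R).const_mul (R * (√k)⁻¹)).mono'
    (by fun_prop : Measurable _).aestronglyMeasurable
    ((ae_restrict_iff' measurableSet_Ioo).2 (ae_of_all _ fun y hy ↦ ?_))
  have hy0 : 0 ≤ y := hy.1.le
  rw [Nat.add_one_sub_one, pow_one, smul_eq_mul, Real.norm_of_nonneg (by positivity), mul_assoc]
  exact mul_le_mul hy.2.le (inv_sqrt_abs_sq_sub_sq_le hk hy0) (by positivity) (hy0.trans hy.2.le)

lemma abs_mul_norm_g0hat_le_norm (hk : 0 < k) (h : k ≤ ‖ξ‖) :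
    |‖ξ‖ ^ 2 - k ^ 2| * ‖g0hat k ξ‖ ≤ ‖ξ‖ := by
  rw [norm_g0hat hk, ← div_eq_mul_inv, Real.div_sqrt, abs_of_nonneg (sub_nonneg.2 (by gcongr))]
  exact Real.sqrt_le_iff.2 ⟨norm_nonneg ξ, sub_le_self _ (sq_nonneg k)⟩

lemma norm_g0hat_le (hk : 0 < k) (h : 2 * k ≤ ‖ξ‖) : ‖g0hat k ξ‖ ≤ 2 * ‖ξ‖⁻¹ := by
  have hξ : 0 < ‖ξ‖ := by linarith
  have hhalf : ‖ξ‖ / 2 ≤ √|‖ξ‖ ^ 2 - k ^ 2| :=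
    Real.le_sqrt_of_sq_le (le_abs.2 (.inl (by nlinarith)))
  rw [norm_g0hat hk]
  calc (√|‖ξ‖ ^ 2 - k ^ 2|)⁻¹ ≤ (‖ξ‖ / 2)⁻¹ := by gcongr
    _ = 2 * ‖ξ‖⁻¹ := by rw [inv_div, div_eq_mul_inv]

end Symbol

/-- The pointwise length `|F̂(ξ)|` of the planar field with Fourier data `(F1, F2)`. -/
def fieldNorm (F1 F2 : R2 → ℂ) (ξ : R2) : ℝ := √(‖F1 ξ‖ ^ 2 + ‖F2 ξ‖ ^ 2)

/-- The pointwise density `(|F̂(ξ)|² + |ξ·F̂(ξ)|²)^{1/2}` of the graph norm of the divergence: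
`2π ‖V‖_X` is the `L²` norm of `graphNorm V.c1.ft V.c2.ft` with weight `(1+|ξ|²)^{-1/2}`. -/
def graphNorm (F1 F2 : R2 → ℂ) (ξ : R2) : ℝ := √(fieldNorm F1 F2 ξ ^ 2 + ‖dotFt F1 F2 ξ‖ ^ 2)

section PointwiseBounds

variable {k : ℝ} (F1 F2 G1 G2 : R2 → ℂ) {ξ : R2}

lemma fieldNorm_nonneg (ξ : R2) : 0 ≤ fieldNorm F1 F2 ξ := Real.sqrt_nonneg _

lemma graphNorm_nonneg (ξ : R2) : 0 ≤ graphNorm F1 F2 ξ := Real.sqrt_nonneg _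

lemma fieldNorm_sq (ξ : R2) : fieldNorm F1 F2 ξ ^ 2 = ‖F1 ξ‖ ^ 2 + ‖F2 ξ‖ ^ 2 :=
  Real.sq_sqrt (by positivity)

lemma graphNorm_sq (ξ : R2) :
    graphNorm F1 F2 ξ ^ 2 = ‖F1 ξ‖ ^ 2 + ‖F2 ξ‖ ^ 2 + ‖dotFt F1 F2 ξ‖ ^ 2 := by
  rw [graphNorm, Real.sq_sqrt (by positivity), fieldNorm_sq]

lemma fieldNorm_le_graphNorm (ξ : R2) : fieldNorm F1 F2 ξ ≤ graphNorm F1 F2 ξ :=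
  Real.le_sqrt_of_sq_le (le_add_of_nonneg_right (sq_nonneg _))

lemma norm_dotFt_le_graphNorm (ξ : R2) : ‖dotFt F1 F2 ξ‖ ≤ graphNorm F1 F2 ξ :=
  Real.le_sqrt_of_sq_le (le_add_of_nonneg_left (sq_nonneg _))

lemma norm_dotFt_sq_add_norm_curlFt_sq (ξ : R2) :
    ‖dotFt F1 F2 ξ‖ ^ 2 + ‖curlFt F1 F2 ξ‖ ^ 2 = (‖ξ‖ * fieldNorm F1 F2 ξ) ^ 2 := by
  rw [mul_pow, fieldNorm_sq, EuclideanSpace.real_norm_sq_eq, Fin.sum_univ_two]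
  simp only [dotFt, curlFt, ← Complex.normSq_eq_norm_sq, Complex.normSq_apply, Complex.add_re,
    Complex.add_im, Complex.sub_re, Complex.sub_im, Complex.mul_re, Complex.mul_im,
    Complex.ofReal_re, Complex.ofReal_im]
  ring

lemma norm_dotFt_le (ξ : R2) : ‖dotFt F1 F2 ξ‖ ≤ ‖ξ‖ * fieldNorm F1 F2 ξ :=
  le_of_sq_le_sq ((le_add_of_nonneg_right (sq_nonneg _)).trans_eq
    (norm_dotFt_sq_add_norm_curlFt_sq F1 F2 ξ))
    (mul_nonneg (norm_nonneg ξ) (fieldNorm_nonneg F1 F2 ξ))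

lemma norm_curlFt_le (ξ : R2) : ‖curlFt F1 F2 ξ‖ ≤ ‖ξ‖ * fieldNorm F1 F2 ξ :=
  le_of_sq_le_sq ((le_add_of_nonneg_left (sq_nonneg _)).trans_eq
    (norm_dotFt_sq_add_norm_curlFt_sq F1 F2 ξ))
    (mul_nonneg (norm_nonneg ξ) (fieldNorm_nonneg F1 F2 ξ))

lemma norm_dotFt_mul_norm_dotFt_le (ξ : R2) :
    ‖dotFt F1 F2 ξ‖ * ‖dotFt G1 G2 ξ‖ ≤ ‖ξ‖ ^ 2 * (fieldNorm F1 F2 ξ * fieldNorm G1 G2 ξ) :=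
  (mul_le_mul (norm_dotFt_le F1 F2 ξ) (norm_dotFt_le G1 G2 ξ) (norm_nonneg _)
    (mul_nonneg (norm_nonneg ξ) (fieldNorm_nonneg F1 F2 ξ))).trans_eq (by ring)

lemma norm_curlFt_mul_norm_curlFt_le (ξ : R2) :
    ‖curlFt F1 F2 ξ‖ * ‖curlFt G1 G2 ξ‖ ≤ ‖ξ‖ ^ 2 * (fieldNorm F1 F2 ξ * fieldNorm G1 G2 ξ) :=
  (mul_le_mul (norm_curlFt_le F1 F2 ξ) (norm_curlFt_le G1 G2 ξ) (norm_nonneg _)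
    (mul_nonneg (norm_nonneg ξ) (fieldNorm_nonneg F1 F2 ξ))).trans_eq (by ring)

lemma norm_Bintegrand_le (k : ℝ) (ξ : R2) :
    ‖Bintegrand k F1 F2 G1 G2 ξ‖ ≤ ‖g0hat k ξ‖ *
      (|‖ξ‖ ^ 2 - k ^ 2| * (‖dotFt F1 F2 ξ‖ * ‖dotFt G1 G2 ξ‖) +
        k ^ 2 * (‖curlFt F1 F2 ξ‖ * ‖curlFt G1 G2 ξ‖)) / ‖ξ‖ ^ 2 := by
  unfold Bintegrand
  rw [norm_div, norm_mul, Complex.norm_real, Real.norm_of_nonneg (sq_nonneg ‖ξ‖)]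
  gcongr
  refine (norm_sub_le _ _).trans_eq ?_
  simp only [norm_mul, RCLike.norm_conj, Complex.norm_real, Real.norm_of_nonneg (sq_nonneg k),
    Real.norm_eq_abs]

lemma norm_Bintegrand_le_of_norm_le (h : ‖ξ‖ ≤ 2 * k) :
    ‖Bintegrand k F1 F2 G1 G2 ξ‖ ≤
      4 * k ^ 2 * (fieldNorm F1 F2 ξ * fieldNorm G1 G2 ξ) * ‖g0hat k ξ‖ := by
  have hF := fieldNorm_nonneg F1 F2 ξ
  have hG := fieldNorm_nonneg G1 G2 ξ
  have hdot := norm_dotFt_mul_norm_dotFt_le F1 F2 G1 G2 ξ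
  have hcurl := norm_curlFt_mul_norm_curlFt_le F1 F2 G1 G2 ξ
  have hsymbol : |‖ξ‖ ^ 2 - k ^ 2| ≤ 3 * k ^ 2 :=
    abs_le.2 ⟨by linarith [sq_nonneg ‖ξ‖, sq_nonneg k], by nlinarith [norm_nonneg ξ]⟩
  refine (norm_Bintegrand_le F1 F2 G1 G2 k ξ).trans
    (div_le_of_le_mul₀ (sq_nonneg _) (by positivity) ?_)
  calc ‖g0hat k ξ‖ * (|‖ξ‖ ^ 2 - k ^ 2| * (‖dotFt F1 F2 ξ‖ * ‖dotFt G1 G2 ξ‖) +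
          k ^ 2 * (‖curlFt F1 F2 ξ‖ * ‖curlFt G1 G2 ξ‖))
      ≤ ‖g0hat k ξ‖ * (3 * k ^ 2 * (‖ξ‖ ^ 2 * (fieldNorm F1 F2 ξ * fieldNorm G1 G2 ξ)) +
          k ^ 2 * (‖ξ‖ ^ 2 * (fieldNorm F1 F2 ξ * fieldNorm G1 G2 ξ))) := by
        gcongr
    _ = 4 * k ^ 2 * (fieldNorm F1 F2 ξ * fieldNorm G1 G2 ξ) * ‖g0hat k ξ‖ * ‖ξ‖ ^ 2 := by ring

lemma norm_Bintegrand_le_of_le_norm (hk : 0 < k) (h : 2 * k ≤ ‖ξ‖) :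
    ‖Bintegrand k F1 F2 G1 G2 ξ‖ ≤
      (1 + 2 * k ^ 2) * ‖ξ‖⁻¹ * (graphNorm F1 F2 ξ * graphNorm G1 G2 ξ) := by
  have hξ : 0 < ‖ξ‖ := by linarith
  have hF := graphNorm_nonneg F1 F2 ξ
  have hdot : ‖dotFt F1 F2 ξ‖ * ‖dotFt G1 G2 ξ‖ ≤ graphNorm F1 F2 ξ * graphNorm G1 G2 ξ :=
    mul_le_mul (norm_dotFt_le_graphNorm F1 F2 ξ) (norm_dotFt_le_graphNorm G1 G2 ξ)
      (norm_nonneg _) hF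
  have hcurl : ‖curlFt F1 F2 ξ‖ * ‖curlFt G1 G2 ξ‖ ≤
      ‖ξ‖ ^ 2 * (graphNorm F1 F2 ξ * graphNorm G1 G2 ξ) := by
    refine (norm_curlFt_mul_norm_curlFt_le F1 F2 G1 G2 ξ).trans ?_
    gcongr
    · exact fieldNorm_nonneg G1 G2 ξ
    · exact fieldNorm_le_graphNorm F1 F2 ξ
    · exact fieldNorm_le_graphNorm G1 G2 ξ
  calc ‖Bintegrand k F1 F2 G1 G2 ξ‖
      ≤ ((|‖ξ‖ ^ 2 - k ^ 2| * ‖g0hat k ξ‖) * (‖dotFt F1 F2 ξ‖ * ‖dotFt G1 G2 ξ‖) +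
          k ^ 2 * ‖g0hat k ξ‖ * (‖curlFt F1 F2 ξ‖ * ‖curlFt G1 G2 ξ‖)) / ‖ξ‖ ^ 2 :=
        (norm_Bintegrand_le F1 F2 G1 G2 k ξ).trans_eq (by ring)
    _ ≤ (‖ξ‖ * (graphNorm F1 F2 ξ * graphNorm G1 G2 ξ) +
          k ^ 2 * (2 * ‖ξ‖⁻¹) * (‖ξ‖ ^ 2 * (graphNorm F1 F2 ξ * graphNorm G1 G2 ξ))) / ‖ξ‖ ^ 2 := by
        gcongr
        · exact abs_mul_norm_g0hat_le_norm hk (by linarith)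
        · exact norm_g0hat_le hk h
    _ = (1 + 2 * k ^ 2) * ‖ξ‖⁻¹ * (graphNorm F1 F2 ξ * graphNorm G1 G2 ξ) := by
        field_simp

end PointwiseBounds

section Continuity

variable {F1 F2 : R2 → ℂ}

lemma continuous_dotFt (h1 : Continuous F1) (h2 : Continuous F2) : Continuous (dotFt F1 F2) := by
  unfold dotFt
  fun_prop

lemma continuous_curlFt (h1 : Continuous F1) (h2 : Continuous F2) : Continuous (curlFt F1 F2) := by
  unfold curlFt
  fun_prop

lemma continuous_graphNorm (h1 : Continuous F1) (h2 : Continuous F2) :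
    Continuous (graphNorm F1 F2) := by
  have := continuous_dotFt h1 h2
  unfold graphNorm fieldNorm
  fun_prop

lemma measurable_Bintegrand {G1 G2 : R2 → ℂ} (k : ℝ) (hF1 : Continuous F1) (hF2 : Continuous F2)
    (hG1 : Continuous G1) (hG2 : Continuous G2) : Measurable (Bintegrand k F1 F2 G1 G2) := by
  have hg0 := measurable_g0hat k
  have hdotF := (continuous_dotFt hF1 hF2).measurable
  have hdotG := continuous_conj.measurable.comp (continuous_dotFt hG1 hG2).measurable
  have hcurlF := (continuous_curlFt hF1 hF2).measurable
  have hcurlG := continuous_conj.measurable.comp (continuous_curlFt hG1 hG2).measurable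
  simp only [Function.comp_def] at hdotG hcurlG
  unfold Bintegrand
  fun_prop

end Continuity

namespace Xelt

variable {Γ : Set R2}

lemma integrable_bracketPow_mul_graphNorm_sq (V : Xelt Γ) :
    Integrable fun ξ ↦ bracketPow (-(1 / 2)) ξ * graphNorm V.c1.ft V.c2.ft ξ ^ 2 := by
  simp only [graphNorm_sq, mul_add]
  exact (V.c1.mem.add V.c2.mem).add V.divMem

lemma sqrt_integral_bracketPow_mul_graphNorm_sq (V : Xelt Γ) :
    √(∫ ξ, bracketPow (-(1 / 2)) ξ * graphNorm V.c1.ft V.c2.ft ξ ^ 2) = 2 * π * Xnorm V := by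
  have hX : XnormSq V = ((2 * π) ^ 2)⁻¹ *
      ∫ ξ, bracketPow (-(1 / 2)) ξ * graphNorm V.c1.ft V.c2.ft ξ ^ 2 := by
    have hdiv : wnormSq (-(1 / 2)) (divFt V) = wnormSq (-(1 / 2)) (dotFt V.c1.ft V.c2.ft) := by
      simp only [wnormSq, divFt, norm_mul, Complex.norm_I, one_mul]
    have hfield : Integrable fun ξ : R2 ↦
        (1 + ‖ξ‖ ^ 2) ^ (-(1 / 2) : ℝ) * ‖V.c1.ft ξ‖ ^ 2 +
          (1 + ‖ξ‖ ^ 2) ^ (-(1 / 2) : ℝ) * ‖V.c2.ft ξ‖ ^ 2 := V.c1.mem.add V.c2.mem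
    rw [XnormSq, HnormSq, hdiv, wnormSq, wnormSq, wnormSq, ← mul_add, ← mul_add,
      ← integral_add V.c1.mem V.c2.mem, ← integral_add hfield V.divMem]
    simp only [graphNorm_sq, mul_add, bracketPow]
  unfold Xnorm
  rw [hX, Real.sqrt_mul (by positivity), Real.sqrt_inv, Real.sqrt_sq (by positivity),
    mul_inv_cancel_left₀ (by positivity)]

lemma integrable_bracketPow_mul_graphNorm_mul (W V : Xelt Γ) :
    Integrable fun ξ ↦ bracketPow (-(1 / 2)) ξ *
      (graphNorm W.c1.ft W.c2.ft ξ * graphNorm V.c1.ft V.c2.ft ξ) :=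
  integrable_weight_mul_mul (continuous_bracketPow _).aestronglyMeasurable
    (fun ξ ↦ (bracketPow_pos _ ξ).le)
    (continuous_graphNorm W.c1.cont W.c2.cont).aestronglyMeasurable
    (continuous_graphNorm V.c1.cont V.c2.cont).aestronglyMeasurable
    W.integrable_bracketPow_mul_graphNorm_sq V.integrable_bracketPow_mul_graphNorm_sq

lemma integral_bracketPow_mul_graphNorm_mul_le (W V : Xelt Γ) :
    ∫ ξ, bracketPow (-(1 / 2)) ξ *
      (graphNorm W.c1.ft W.c2.ft ξ * graphNorm V.c1.ft V.c2.ft ξ) ≤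
        (2 * π * Xnorm W) * (2 * π * Xnorm V) := by
  rw [← sqrt_integral_bracketPow_mul_graphNorm_sq, ← sqrt_integral_bracketPow_mul_graphNorm_sq]
  exact integral_weight_mul_mul_le (continuous_bracketPow _).aestronglyMeasurable
    (fun ξ ↦ (bracketPow_pos _ ξ).le)
    (continuous_graphNorm W.c1.cont W.c2.cont).aestronglyMeasurable
    (continuous_graphNorm V.c1.cont V.c2.cont).aestronglyMeasurable
    W.integrable_bracketPow_mul_graphNorm_sq V.integrable_bracketPow_mul_graphNorm_sq

end Xelt

lemma wnormSq_nonneg (s : ℝ) (F : R2 → ℂ) : 0 ≤ wnormSq s F :=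
  mul_nonneg (by positivity) (integral_nonneg fun ξ ↦ by positivity)

lemma wnorm_sq (s : ℝ) (F : R2 → ℂ) : wnorm s F ^ 2 = wnormSq s F :=
  Real.sq_sqrt (wnormSq_nonneg s F)

lemma exists_fieldNorm_le_Xnorm {Γ : Set R2} (hΓ : Bornology.IsBounded Γ) :
    ∃ C, 0 ≤ C ∧ ∀ (V : Xelt Γ) (ξ : R2),
      fieldNorm V.c1.ft V.c2.ft ξ ≤ C * bracketPow (1 / 4) ξ * Xnorm V := by
  obtain ⟨C, hC, hft⟩ := exists_norm_ft_le_wnorm hΓ (-(1 / 2))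
  rw [show |(-(1 / 2) : ℝ)| / 2 = 1 / 4 by norm_num [abs_of_pos]] at hft
  refine ⟨C, hC, fun V ξ ↦ ?_⟩
  have hpos := bracketPow_pos (1 / 4) ξ
  have hH : HnormSq V ≤ XnormSq V := le_add_of_nonneg_right (wnormSq_nonneg _ _)
  calc fieldNorm V.c1.ft V.c2.ft ξ
      ≤ √((C * bracketPow (1 / 4) ξ) ^ 2 * HnormSq V) := by
        refine Real.sqrt_le_sqrt ?_
        rw [HnormSq, ← wnorm_sq, ← wnorm_sq, mul_add, ← mul_pow, ← mul_pow]
        gcongr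
        exacts [hft V.c1 ξ, hft V.c2 ξ]
    _ ≤ √((C * bracketPow (1 / 4) ξ) ^ 2 * XnormSq V) := by gcongr
    _ = C * bracketPow (1 / 4) ξ * Xnorm V := by
        rw [Real.sqrt_mul (sq_nonneg _), Real.sqrt_sq (by positivity), Xnorm]

lemma exists_norm_Bintegrand_le_near {Γ : Set R2} (hΓ : Bornology.IsBounded Γ) (k : ℝ) :
    ∃ C, 0 ≤ C ∧ ∀ (W V : Xelt Γ) (ξ : R2), ‖ξ‖ ≤ 2 * k →
      ‖Bintegrand k W.c1.ft W.c2.ft V.c1.ft V.c2.ft ξ‖ ≤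
        C * Xnorm W * Xnorm V * ‖g0hat k ξ‖ := by
  obtain ⟨C, hC, hfield⟩ := exists_fieldNorm_le_Xnorm hΓ
  refine ⟨4 * k ^ 2 * (C * (1 + (2 * k) ^ 2) ^ (1 / 4 : ℝ)) ^ 2, by positivity,
    fun W V ξ hξ ↦ ?_⟩
  have hlocal (U : Xelt Γ) :
      fieldNorm U.c1.ft U.c2.ft ξ ≤ C * (1 + (2 * k) ^ 2) ^ (1 / 4 : ℝ) * Xnorm U := by
    refine (hfield U ξ).trans ?_
    unfold bracketPow
    gcongr
    exact Real.sqrt_nonneg _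
  calc ‖Bintegrand k W.c1.ft W.c2.ft V.c1.ft V.c2.ft ξ‖
      ≤ 4 * k ^ 2 * (fieldNorm W.c1.ft W.c2.ft ξ * fieldNorm V.c1.ft V.c2.ft ξ) * ‖g0hat k ξ‖ :=
        norm_Bintegrand_le_of_norm_le _ _ _ _ hξ
    _ ≤ 4 * k ^ 2 * ((C * (1 + (2 * k) ^ 2) ^ (1 / 4 : ℝ) * Xnorm W) *
          (C * (1 + (2 * k) ^ 2) ^ (1 / 4 : ℝ) * Xnorm V)) * ‖g0hat k ξ‖ := by
        have := fieldNorm_nonneg V.c1.ft V.c2.ft ξ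
        gcongr
        exacts [(fieldNorm_nonneg _ _ ξ).trans (hlocal W), hlocal W, hlocal V]
    _ = _ := by ring

/-- A majorant for the integrand of `B(W, V)`: a multiple of `|ĝ₀|` on the disc `|ξ| < 2k`
containing the singular circle, plus a multiple of the product of the densities of `‖W‖_X` and
`‖V‖_X`. -/
def Bmajorant (k M A : ℝ) {Γ : Set R2} (W V : Xelt Γ) (ξ : R2) : ℝ :=
  M * Xnorm W * Xnorm V * (Metric.ball 0 (2 * k)).indicator (fun ξ ↦ ‖g0hat k ξ‖) ξ +
    A * (bracketPow (-(1 / 2)) ξ * (graphNorm W.c1.ft W.c2.ft ξ * graphNorm V.c1.ft V.c2.ft ξ))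

lemma exists_norm_Bintegrand_le_Bmajorant {Γ : Set R2} (hΓ : Bornology.IsBounded Γ) {k : ℝ}
    (hk : 0 < k) : ∃ M A, 0 ≤ M ∧ 0 < A ∧ ∀ (W V : Xelt Γ) (ξ : R2),
      ‖Bintegrand k W.c1.ft W.c2.ft V.c1.ft V.c2.ft ξ‖ ≤ Bmajorant k M A W V ξ := by
  obtain ⟨M, hM, hnear⟩ := exists_norm_Bintegrand_le_near hΓ k
  refine ⟨M, (1 + 2 * k ^ 2) * (1 + (2 * k)⁻¹), hM, by positivity, fun W V ξ ↦ ?_⟩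
  have hprod : 0 ≤ graphNorm W.c1.ft W.c2.ft ξ * graphNorm V.c1.ft V.c2.ft ξ :=
    mul_nonneg (graphNorm_nonneg _ _ ξ) (graphNorm_nonneg _ _ ξ)
  unfold Bmajorant
  rcases lt_or_ge ‖ξ‖ (2 * k) with h | h
  · rw [Set.indicator_of_mem (mem_ball_zero_iff.2 h)]
    exact le_add_of_le_of_nonneg (hnear W V ξ h.le)
      (mul_nonneg (by positivity) (mul_nonneg (bracketPow_pos _ ξ).le hprod))
  · rw [Set.indicator_of_notMem (mem_ball_zero_iff.not.2 h.not_gt), mul_zero, zero_add]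
    calc ‖Bintegrand k W.c1.ft W.c2.ft V.c1.ft V.c2.ft ξ‖
        ≤ (1 + 2 * k ^ 2) * ‖ξ‖⁻¹ *
            (graphNorm W.c1.ft W.c2.ft ξ * graphNorm V.c1.ft V.c2.ft ξ) :=
          norm_Bintegrand_le_of_le_norm _ _ _ _ hk h
      _ ≤ (1 + 2 * k ^ 2) * ((1 + (2 * k)⁻¹) * bracketPow (-(1 / 2)) ξ) *
            (graphNorm W.c1.ft W.c2.ft ξ * graphNorm V.c1.ft V.c2.ft ξ) := by
          gcongr
          exact inv_norm_le_bracketPow (by positivity) h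
      _ = _ := by ring

section Majorant

variable {Γ : Set R2} {k : ℝ}

lemma integrable_indicator_norm_g0hat (hk : 0 < k) :
    Integrable ((Metric.ball 0 (2 * k)).indicator fun ξ ↦ ‖g0hat k ξ‖) :=
  (integrable_indicator_iff measurableSet_ball).2 (integrableOn_norm_g0hat hk (2 * k))

lemma integrable_Bmajorant (hk : 0 < k) (M A : ℝ) (W V : Xelt Γ) :
    Integrable (Bmajorant k M A W V) :=
  ((integrable_indicator_norm_g0hat hk).const_mul _).add
    ((W.integrable_bracketPow_mul_graphNorm_mul V).const_mul A)

lemma integral_Bmajorant_le (hk : 0 < k) (M : ℝ) {A : ℝ} (hA : 0 ≤ A) (W V : Xelt Γ) :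
    ∫ ξ, Bmajorant k M A W V ξ ≤
      (M * (∫ ξ in Metric.ball 0 (2 * k), ‖g0hat k ξ‖) + A * (2 * π) ^ 2) * Xnorm W * Xnorm V := by
  unfold Bmajorant
  rw [integral_add ((integrable_indicator_norm_g0hat hk).const_mul _)
      ((W.integrable_bracketPow_mul_graphNorm_mul V).const_mul A),
    integral_const_mul, integral_const_mul, integral_indicator measurableSet_ball]
  have hfar := mul_le_mul_of_nonneg_left (W.integral_bracketPow_mul_graphNorm_mul_le V) hA
  linarith

end Majorant

theorem statement1_general (Γ : Set R2) (hΓ : Bornology.IsBounded Γ) (k : ℝ) (hk : 0 < k) :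
    ∃ C > 0, ∀ W V : Xelt Γ,
      Integrable (fun ξ : R2 => Bintegrand k W.c1.ft W.c2.ft V.c1.ft V.c2.ft ξ) volume ∧
      ‖Bform k W V‖ ≤ C * Xnorm W * Xnorm V := by
  obtain ⟨M, A, hM, hA, hle⟩ := exists_norm_Bintegrand_le_Bmajorant hΓ hk
  refine ⟨M * (∫ ξ in Metric.ball 0 (2 * k), ‖g0hat k ξ‖) + A * (2 * π) ^ 2, by positivity,
    fun W V ↦ ?_⟩
  have hmajorant := integrable_Bmajorant hk M A W V
  have hmeas : AEStronglyMeasurable (Bintegrand k W.c1.ft W.c2.ft V.c1.ft V.c2.ft) :=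
    (measurable_Bintegrand k W.c1.cont W.c2.cont V.c1.cont V.c2.cont).aestronglyMeasurable
  exact ⟨hmajorant.mono' hmeas (ae_of_all _ (hle W V)),
    (norm_integral_le_of_norm_le hmajorant (ae_of_all _ (hle W V))).trans
      (integral_Bmajorant_le hk M hA.le W V)⟩

/-- the integral defining `B(W,V)` converges absolutely for all
`W, V ∈ X`, and `B` is a bounded sesquilinear form on `X × X`:
`|B(W,V)| ≤ C ‖W‖_X ‖V‖_X`. -/
theorem statement1 (Γ : Set R2) (hΓ : IsLipschitzDomain Γ) (k : ℝ) (hk : 0 < k) :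
    ∃ C > 0, ∀ W V : Xelt Γ,
      Integrable (fun ξ : R2 => Bintegrand k W.c1.ft W.c2.ft V.c1.ft V.c2.ft ξ) volume ∧
      ‖Bform k W V‖ ≤ C * Xnorm W * Xnorm V :=
  statement1_general Γ hΓ.2.1 k hk
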